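/- Let A, B be unital C*-algebras and T1, T2 : A → B completely positive maps. Then for every cp extension T̂ of (T1, T2), every n ≥ 1, and every x ∈ M_n(A), ‖((T1 − T2) applied entrywise)(x)‖ ≤ (√‖T1(1)‖ + √‖T2(1)‖) · √‖T1(1) + T2(1) − T̂_12(1) − T̂_21(1)‖ · ‖x‖. In particular, the cb-norm of T1 − T2 is at most (√‖T1(1)‖ + √‖T2(1)‖) · β(T1, T2). -/

import Mathlib

noncomputable section

/-- A map between star algebras is *completely positive* if, for every `n`, its
entrywise application to `n × n` matrices maps positive elements (i.e. elements of the form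
`star y * y`) to positive elements. -/
def IsCPMap {A B : Type*} [NonUnitalSemiring A] [StarRing A]
    [NonUnitalSemiring B] [StarRing B] (T : A → B) : Prop :=
  ∀ (n : ℕ) (x : Matrix (Fin n) (Fin n) A),
    (∃ y : Matrix (Fin n) (Fin n) A, x = star y * y) →
      ∃ z : Matrix (Fin n) (Fin n) B, x.map T = star z * z

/-- `That : A → M₂(B)` is a cp extension of the pair `(T₁, T₂)`: it is completely positive
and its diagonal entries are `T₁` and `T₂`. -/
def IsCPExtension {A B : Type*} [CStarAlgebra A] [CStarAlgebra B]
    (T₁ T₂ : A → B) (That : A →ₗ[ℂ] Matrix (Fin 2) (Fin 2) B) : Prop :=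
  IsCPMap That ∧ (∀ a : A, That a 0 0 = T₁ a) ∧ (∀ a : A, That a 1 1 = T₂ a)

/-- The Bures distance between two completely positive maps `T₁ T₂ : A → B`:
`β(T₁,T₂) = √ inf { ‖T₁ 1 + T₂ 1 - T̂₁₂ 1 - T̂₂₁ 1‖ | T̂ a cp extension of (T₁, T₂) }`. -/
noncomputable def buresDist {A B : Type*} [CStarAlgebra A] [CStarAlgebra B]
    (T₁ T₂ : A → B) : ℝ :=
  Real.sqrt (sInf { r : ℝ | ∃ That : A →ₗ[ℂ] Matrix (Fin 2) (Fin 2) B,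
    IsCPExtension T₁ T₂ That ∧ r = ‖T₁ 1 + T₂ 1 - That 1 0 1 - That 1 1 0‖ })


/-- `ν` is a C*-norm on the star algebra `R`. -/
structure IsCStarNorm {R : Type*} [NonUnitalRing R] [StarRing R] [Module ℂ R]
    (ν : R → ℝ) : Prop where
  add_le : ∀ x y : R, ν (x + y) ≤ ν x + ν y
  smul_eq : ∀ (c : ℂ) (x : R), ν (c • x) = ‖c‖ * ν x
  eq_zero_iff : ∀ x : R, ν x = 0 ↔ x = 0
  mul_le : ∀ x y : R, ν (x * y) ≤ ν x * ν y
  star_mul_self : ∀ x : R, ν (star x * x) = ν x * ν x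


section CNorm

set_option linter.unusedSectionVars false

variable {C : Type*} [CStarAlgebra C] [PartialOrder C] [StarOrderedRing C] {ν : C → ℝ}


lemma IsCStarNorm.nonneg (h : IsCStarNorm ν) (x : C) : 0 ≤ ν x := by
  have h0 : ν 0 = 0 := (h.eq_zero_iff 0).2 rfl
  have h1 := h.add_le x ((-1 : ℂ) • x)
  rw [h.smul_eq] at h1
  simp [h0] at h1
  linarith

lemma IsCStarNorm.star_eq (h : IsCStarNorm ν) (x : C) : ν (star x) = ν x := by
  have key : ∀ y : C, ν y ≤ ν (star y) := by
    intro y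
    by_contra! hlt
    have h1 := h.mul_le (star y) y
    rw [h.star_mul_self] at h1
    have h2 := h.nonneg (star y)
    nlinarith
  refine le_antisymm ?_ (key x)
  simpa using key (star x)

lemma IsCStarNorm.unitary_le (h : IsCStarNorm ν) (u : unitary C) : ν (u : C) ≤ 1 := by
  have h1 := h.star_mul_self (u : C)
  have h2 := h.star_mul_self (1 : C)
  have h3 := h.nonneg (1 : C)
  have h4 := h.nonneg (u : C)
  rw [Unitary.coe_star_mul_self] at h1
  simp only [star_one, mul_one] at h2
  have h5 : ν (1 : C) ≤ 1 := by nlinarith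
  nlinarith

lemma IsCStarNorm.le_one_of_sa (h : IsCStarNorm ν) (a : selfAdjoint C) (ha : ‖a‖ ≤ 1) :
    ν (a : C) ≤ 1 := by
  set u := selfAdjoint.unitarySelfAddISMul a ha with hu
  have h1 : (a : C) = (2⁻¹ : ℂ) • ((u : C) + star (u : C)) := by
    have := selfAdjoint.realPart_unitarySelfAddISMul a ha
    rw [← hu] at this
    rw [← this, realPart_apply_coe, ← Complex.coe_smul]
    norm_num
  have h2 := h.add_le (u : C) (star (u : C))
  rw [h.star_eq] at h2
  have h3 := h.unitary_le u
  rw [h1, h.smul_eq]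
  norm_num
  linarith

lemma IsCStarNorm.le_norm_sa (h : IsCStarNorm ν) (a : C) (ha : IsSelfAdjoint a) :
    ν a ≤ ‖a‖ := by
  by_cases h0 : a = 0
  · rw [(h.eq_zero_iff a).2 h0]; exact norm_nonneg _
  have hn : 0 < ‖a‖ := norm_pos_iff.2 h0
  have hsa : IsSelfAdjoint (‖a‖⁻¹ • a) := by
    rw [IsSelfAdjoint, star_smul, ha.star_eq, star_trivial]
  have := h.le_one_of_sa ⟨_, hsa⟩ (by
    change ‖‖a‖⁻¹ • a‖ ≤ 1
    rw [norm_smul]; simp [hn.ne'])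
  simp only at this
  rw [← Complex.coe_smul, h.smul_eq] at this
  simp only [Complex.ofReal_inv, norm_inv, Complex.norm_real, norm_norm] at this
  rwa [inv_mul_le_iff₀ hn, mul_one] at this

lemma IsCStarNorm.le_norm (h : IsCStarNorm ν) (x : C) : ν x ≤ ‖x‖ := by
  have h1 := h.le_norm_sa (star x * x) (IsSelfAdjoint.star_mul_self x)
  rw [h.star_mul_self, CStarRing.norm_star_mul_self] at h1
  exact (mul_self_le_mul_self_iff (h.nonneg _) (norm_nonneg _)).2 h1

lemma IsCStarNorm.pow_mul_le (h : IsCStarNorm ν) (a q : C) (n : ℕ) :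
    ν (a ^ n * q) ≤ ν a ^ n * ν q := by
  induction n with
  | zero => simp
  | succ n ih =>
    rw [pow_succ', mul_assoc, pow_succ', mul_assoc]
    exact (h.mul_le _ _).trans (mul_le_mul_of_nonneg_left ih (h.nonneg a))

lemma IsCStarNorm.norm_le_pos (h : IsCStarNorm ν) (a : C) (ha : 0 ≤ a) : ‖a‖ ≤ ν a := by
  by_contra! hlt
  obtain ⟨s, hs1, hs2⟩ := exists_between hlt
  have hμ := h.nonneg a
  have hs0 : 0 < s := hμ.trans_lt hs1
  have hsa : IsSelfAdjoint a := .of_nonneg ha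
  have hne : a ≠ 0 := norm_pos_iff.1 (hs0.trans hs2)
  have : Nontrivial C := ⟨⟨a, 0, hne⟩⟩
  have hmem := CStarAlgebra.norm_mem_spectrum_of_nonneg ha
  set p : C := cfc (fun t : ℝ => max (t - s) 0) a with hp
  have hpn : ∀ n : ℕ, ν p ≤ ν a ^ n * (‖a‖ / s ^ n) := by
    intro n
    have hc : Continuous (fun t : ℝ => max (t - s) 0 / (max t s) ^ n) := by
      refine Continuous.div (by fun_prop) (by fun_prop) ?_
      intro t
      have : 0 < max t s := lt_max_of_lt_right hs0
      positivity
    have e : p = a ^ n * cfc (fun t : ℝ => max (t - s) 0 / (max t s) ^ n) a := by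
      have e1 : a ^ n = cfc (fun t : ℝ => t ^ n) a := (cfc_pow_id (R := ℝ) a n).symm
      conv_rhs => rw [e1]
      rw [← cfc_mul (fun t : ℝ => t ^ n) _ a (by fun_prop) hc.continuousOn]
      refine cfc_congr ?_
      intro t _
      simp only
      rcases le_total t s with hts | hts
      · simp [max_eq_right (sub_nonpos.2 hts)]
      · have : 0 < t := hs0.trans_le hts
        rw [max_eq_left hts]
        field_simp
    rw [e]
    refine (h.pow_mul_le _ _ _).trans ?_
    refine mul_le_mul_of_nonneg_left ?_ (by positivity)
    refine (h.le_norm _).trans (norm_cfc_le (by positivity) ?_)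
    intro t ht
    have ht1 : t ≤ ‖a‖ := (le_abs_self t).trans (spectrum.norm_le_norm_of_mem ht)
    have hm : 0 < max t s := lt_max_of_lt_right hs0
    rw [Real.norm_of_nonneg (by positivity)]
    have : max (t - s) 0 ≤ ‖a‖ := max_le (by linarith) (norm_nonneg _)
    gcongr
    exact le_max_right _ _
  have hlim : Filter.Tendsto (fun n : ℕ => ν a ^ n * (‖a‖ / s ^ n)) Filter.atTop (nhds 0) := by
    have : Filter.Tendsto (fun n : ℕ => (ν a / s) ^ n * ‖a‖) Filter.atTop (nhds (0 * ‖a‖)) :=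
      (tendsto_pow_atTop_nhds_zero_of_lt_one (by positivity) ((div_lt_one hs0).2 hs1)).mul_const _
    rw [zero_mul] at this
    refine this.congr ?_
    intro n
    rw [div_pow]; ring
  have hp0 : ν p = 0 := le_antisymm (ge_of_tendsto' hlim hpn) (h.nonneg p)
  rw [h.eq_zero_iff] at hp0
  have hb := norm_apply_le_norm_cfc (fun t : ℝ => max (t - s) 0) a hmem
  rw [← hp, hp0, norm_zero, max_eq_left (by linarith), Real.norm_of_nonneg (by linarith)] at hb
  linarith

lemma IsCStarNorm.norm_le (h : IsCStarNorm ν) (x : C) : ‖x‖ ≤ ν x := by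
  have h1 := h.norm_le_pos (star x * x) (star_mul_self_nonneg x)
  rw [h.star_mul_self, CStarRing.norm_star_mul_self] at h1
  exact (mul_self_le_mul_self_iff (norm_nonneg _) (h.nonneg _)).2 h1

/-- abstract Cauchy-Schwarz -/
lemma cs_abstract (a b c : C) (ha : IsSelfAdjoint a)
    (hpos : ∀ l : ℝ, 0 ≤ star b * a * b - (2 * l) • (star b * b) + (l ^ 2) • c) :
    ‖b‖ ^ 2 ≤ ‖a‖ * ‖c‖ := by
  have key : ∀ l : ℝ, ‖a‖ < l → ‖b‖ ^ 2 ≤ l * ‖c‖ := by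
    intro l hl
    have hl0 : 0 < l := (norm_nonneg a).trans_lt hl
    have h1 : star b * a * b ≤ l • (star b * b) := by
      have h2 : a ≤ algebraMap ℝ C l :=
        ha.le_algebraMap_norm_self.trans (algebraMap_mono C hl.le)
      have h3 := star_left_conjugate_le_conjugate h2 b
      refine h3.trans (le_of_eq ?_)
      rw [Algebra.algebraMap_eq_smul_one, mul_smul_comm, mul_one, smul_mul_assoc]
    have h4 : l • (star b * b) ≤ (l ^ 2) • c := by
      have h5 := hpos l
      have h6 := add_le_add h5 (sub_nonneg.2 h1)
      have h7 : star b * a * b - (2 * l) • (star b * b) + (l ^ 2) • c +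
          (l • (star b * b) - star b * a * b) = (l ^ 2) • c - l • (star b * b) := by
        rw [two_mul, add_smul]; abel
      rw [h7, add_zero] at h6
      exact sub_nonneg.1 h6
    have h8 := CStarAlgebra.norm_le_norm_of_nonneg_of_le
      (smul_nonneg hl0.le (star_mul_self_nonneg b)) h4
    rw [norm_smul, norm_smul, CStarRing.norm_star_mul_self, Real.norm_of_nonneg hl0.le,
      Real.norm_of_nonneg (by positivity)] at h8
    have h9 : l * ‖b‖ ^ 2 ≤ l * (l * ‖c‖) := by nlinarith
    exact le_of_mul_le_mul_left h9 hl0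
  have ht : Filter.Tendsto (fun l : ℝ => l * ‖c‖) (nhdsWithin ‖a‖ (Set.Ioi ‖a‖))
      (nhds (‖a‖ * ‖c‖)) :=
    ((continuous_id.mul continuous_const).tendsto _).mono_left nhdsWithin_le_nhds
  exact ge_of_tendsto ht (Filter.eventually_of_mem self_mem_nhdsWithin key)

lemma exists_complement (X : C) : ∃ w : C,
    star X * X + star w * w = ((‖X‖ ^ 2 : ℝ) : ℂ) • (1 : C) := by
  have h1 : 0 ≤ algebraMap ℝ C (‖X‖ ^ 2) - star X * X := by
    have h2 := (IsSelfAdjoint.star_mul_self X).le_algebraMap_norm_self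
    rw [CStarRing.norm_star_mul_self, ← pow_two] at h2
    exact sub_nonneg.2 h2
  obtain ⟨w, hw⟩ := CStarAlgebra.nonneg_iff_eq_star_mul_self.1 h1
  refine ⟨w, ?_⟩
  rw [← hw, Algebra.algebraMap_eq_smul_one, Complex.coe_smul]
  abel

end CNorm

section Mat

set_option linter.unusedSectionVars false

lemma IsCPMap.fintype {A B : Type*} [NonUnitalSemiring A] [StarRing A]
    [NonUnitalSemiring B] [StarRing B] {T : A → B} (h : IsCPMap T) {ι : Type*} [Fintype ι]
    (y : Matrix ι ι A) : ∃ z : Matrix ι ι B, (star y * y).map T = star z * z := by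
  let e := Fintype.equivFin ι
  obtain ⟨z, hz⟩ := h _ _ ⟨y.submatrix e.symm e.symm, rfl⟩
  refine ⟨z.submatrix e e, ?_⟩
  ext i j
  have h1 := congrFun (congrFun hz (e i)) (e j)
  simp only [Matrix.map_apply, Matrix.mul_apply, Matrix.star_apply, Matrix.submatrix_apply,
    Equiv.symm_apply_apply] at h1 ⊢
  rw [← Equiv.sum_comp e.symm (fun k => star (y k i) * y k j), h1]
  exact (Equiv.sum_comp e (fun k => star (z k (e i)) * z k (e j))).symm

variable {A B : Type*} [CStarAlgebra A] [PartialOrder A] [StarOrderedRing A]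
  [CStarAlgebra B] [PartialOrder B] [StarOrderedRing B]

lemma gram_nonneg {κ : Type*} [Fintype κ] {n : ℕ} (D : Matrix κ (Fin n) B) :
    0 ≤ (CStarMatrix.ofMatrix (D.conjTranspose * D) : CStarMatrix (Fin n) (Fin n) B) := by
  rcases n with _ | n
  · apply le_of_eq
    ext i
    exact i.elim0
  have : (CStarMatrix.ofMatrix (D.conjTranspose * D) : CStarMatrix (Fin (n+1)) (Fin (n+1)) B) =
      ∑ k, star (CStarMatrix.ofMatrix (fun i j => if i = 0 then D k j else 0) :
          CStarMatrix (Fin (n+1)) (Fin (n+1)) B) *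
        (CStarMatrix.ofMatrix (fun i j => if i = 0 then D k j else 0)) := by
    ext i j
    let ev : CStarMatrix (Fin (n+1)) (Fin (n+1)) B →+ B :=
      { toFun := fun M => M i j, map_zero' := rfl, map_add' := fun _ _ => rfl }
    change _ = ev (∑ k, _)
    rw [map_sum]
    change (∑ k, star (D k i) * D k j) = ∑ k, (∑ m : Fin (n+1),
      star (if m = 0 then D k i else 0) * (if m = 0 then D k j else 0))
    refine Finset.sum_congr rfl fun k _ => ?_
    rw [Finset.sum_eq_single 0]
    · simp
    · intro m _ hm
      simp [hm]
    · simp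
  rw [this]
  exact Finset.sum_nonneg fun k _ => star_mul_self_nonneg _

lemma gram_expand {κ : Type*} [Fintype κ] {n : ℕ} (D E : Matrix κ (Fin n) B) (l : ℝ) :
    (D * (D.conjTranspose * E) - l • E).conjTranspose * (D * (D.conjTranspose * E) - l • E) =
    star (D.conjTranspose * E) * (D.conjTranspose * D) * (D.conjTranspose * E) -
      (2 * l) • (star (D.conjTranspose * E) * (D.conjTranspose * E)) +
      (l ^ 2) • (E.conjTranspose * E) := by
  simp only [Matrix.star_eq_conjTranspose, Matrix.conjTranspose_sub, Matrix.conjTranspose_mul,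
    Matrix.conjTranspose_smul, Matrix.conjTranspose_conjTranspose, star_trivial,
    Matrix.sub_mul, Matrix.mul_sub, Matrix.smul_mul, Matrix.mul_smul, Matrix.mul_assoc, smul_smul,
    smul_sub]
  rw [two_mul, add_smul, pow_two]
  abel

lemma gram_cs {κ : Type*} [Fintype κ] {n : ℕ} (D E : Matrix κ (Fin n) B) :
    ‖(CStarMatrix.ofMatrix (D.conjTranspose * E) : CStarMatrix (Fin n) (Fin n) B)‖ ^ 2 ≤
    ‖(CStarMatrix.ofMatrix (D.conjTranspose * D) : CStarMatrix (Fin n) (Fin n) B)‖ *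
    ‖(CStarMatrix.ofMatrix (E.conjTranspose * E) : CStarMatrix (Fin n) (Fin n) B)‖ := by
  refine cs_abstract _ _ _ (.of_nonneg (gram_nonneg D)) ?_
  intro l
  have h := gram_nonneg (D * (D.conjTranspose * E) - l • E)
  refine h.trans (le_of_eq ?_)
  exact gram_expand D E l

/-- diagonal embedding -/
def diagHom (n : ℕ) : B →⋆ₙₐ[ℂ] CStarMatrix (Fin n) (Fin n) B where
  toFun b := CStarMatrix.ofMatrix (Matrix.diagonal fun _ => b)
  map_smul' c b := by
    change (Matrix.diagonal fun _ => c • b) = c • (Matrix.diagonal fun _ => b : Matrix _ _ B)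
    rw [← Matrix.diagonal_smul]; rfl
  map_zero' := by
    change (Matrix.diagonal fun _ => (0 : B)) = (0 : Matrix (Fin n) (Fin n) B)
    simp
  map_add' a b := by
    have h : (Matrix.diagonal fun _ => a + b : Matrix (Fin n) (Fin n) B) =
      (Matrix.diagonal fun _ => a : Matrix (Fin n) (Fin n) B) +
        (Matrix.diagonal fun _ => b : Matrix (Fin n) (Fin n) B) := by simp
    exact h
  map_mul' a b := by
    have h : (Matrix.diagonal fun _ => a * b : Matrix (Fin n) (Fin n) B) =
      (Matrix.diagonal fun _ => a : Matrix (Fin n) (Fin n) B) *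
        (Matrix.diagonal fun _ => b : Matrix (Fin n) (Fin n) B) := by simp
    exact h
  map_star' a := by
    change (Matrix.diagonal fun _ => star a) =
      (Matrix.diagonal fun _ => a : Matrix (Fin n) (Fin n) B).conjTranspose
    rw [Matrix.diagonal_conjTranspose]; rfl

lemma diag_norm_le (n : ℕ) (b : B) :
    ‖(CStarMatrix.ofMatrix (Matrix.diagonal fun _ => b) : CStarMatrix (Fin n) (Fin n) B)‖ ≤ ‖b‖ :=
  NonUnitalStarAlgHom.norm_apply_le (diagHom (B := B) n) b

/-- sesquilinear compression -/
def sesq (That : A →ₗ[ℂ] Matrix (Fin 2) (Fin 2) B) (u v : Fin 2 → B) (a : A) : B :=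
  dotProduct (star u) ((That a).mulVec v)

lemma sesq_smul (That : A →ₗ[ℂ] Matrix (Fin 2) (Fin 2) B) (u v : Fin 2 → B) (c : ℂ) (a : A) :
    sesq That u v (c • a) = c • sesq That u v a := by
  rw [sesq, map_smul, Matrix.smul_mulVec, dotProduct_smul]; rfl

lemma sesq_zero (That : A →ₗ[ℂ] Matrix (Fin 2) (Fin 2) B) (u v : Fin 2 → B)  :
    sesq That u v 0 = 0 := by
  simp [sesq]

lemma sesq_bound (That : A →ₗ[ℂ] Matrix (Fin 2) (Fin 2) B) (hT : IsCPMap That) (u v : Fin 2 → B)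
    (n : ℕ) (x : Matrix (Fin n) (Fin n) A) :
    ‖(CStarMatrix.ofMatrix (x.map (sesq That u v)) : CStarMatrix (Fin n) (Fin n) B)‖ ≤
      Real.sqrt ‖sesq That u u 1‖ * Real.sqrt ‖sesq That v v 1‖ *
        ‖(CStarMatrix.ofMatrix x : CStarMatrix (Fin n) (Fin n) A)‖ := by
  set X : CStarMatrix (Fin n) (Fin n) A := CStarMatrix.ofMatrix x with hX
  set N : ℝ := ‖X‖ with hN
  -- the complement
  obtain ⟨w, hw⟩ : ∃ w : Matrix (Fin n) (Fin n) A,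
      star x * x + star w * w = ((N ^ 2 : ℝ) : ℂ) • (1 : Matrix (Fin n) (Fin n) A) := by
    exact exists_complement X
  obtain ⟨z, hz⟩ := hT.fintype (Matrix.fromBlocks 1 x 0 w)
  have hP : star (Matrix.fromBlocks 1 x 0 w) * (Matrix.fromBlocks 1 x 0 w) =
      Matrix.fromBlocks 1 x (star x) (((N ^ 2 : ℝ) : ℂ) • (1 : Matrix (Fin n) (Fin n) A)) := by
    rw [← hw]
    simp [Matrix.star_eq_conjTranspose, Matrix.fromBlocks_conjTranspose,
      Matrix.fromBlocks_multiply]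
  rw [hP] at hz
  -- vectors
  let D : (Fin 2 → B) → (Fin n → Fin n ⊕ Fin n) → Matrix ((Fin n ⊕ Fin n) × Fin 2) (Fin n) B :=
    fun u s => Matrix.of fun k i => (z k.1 (s i)).mulVec u k.2
  have hD : ∀ (u v : Fin 2 → B) (s t : Fin n → Fin n ⊕ Fin n) (i j : Fin n),
      ((D u s).conjTranspose * D v t) i j = sesq That u v (Matrix.fromBlocks 1 x (star x)
        (((N ^ 2 : ℝ) : ℂ) • (1 : Matrix (Fin n) (Fin n) A)) (s i) (t j)) := by
    intro u v s t i j
    have h1 := congrFun (congrFun hz (s i)) (t j)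
    rw [Matrix.map_apply] at h1
    rw [sesq, h1]
    simp only [Matrix.mul_apply, Matrix.star_apply, Matrix.conjTranspose_apply, D, Matrix.of_apply]
    rw [Fintype.sum_prod_type, Matrix.sum_mulVec, dotProduct_sum]
    refine Finset.sum_congr rfl fun k _ => ?_
    rw [← Matrix.mulVec_mulVec, Matrix.dotProduct_mulVec, Matrix.star_eq_conjTranspose,
      ← Matrix.star_mulVec]
    rfl
  have hcs := gram_cs (D u Sum.inl) (D v Sum.inr)
  have e1 : (D u Sum.inl).conjTranspose * D v Sum.inr = x.map (sesq That u v) := by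
    ext i j
    rw [hD]; simp
  have e2 : (D u Sum.inl).conjTranspose * D u Sum.inl = Matrix.diagonal fun _ => sesq That u u 1 := by
    ext i j
    rw [hD, Matrix.fromBlocks_apply₁₁, Matrix.one_apply, Matrix.diagonal_apply, apply_ite (sesq That u u), sesq_zero]
  have e3 : (D v Sum.inr).conjTranspose * D v Sum.inr =
      Matrix.diagonal fun _ => ((N ^ 2 : ℝ) : ℂ) • sesq That v v 1 := by
    ext i j
    rw [hD, Matrix.fromBlocks_apply₂₂, Matrix.smul_apply, sesq_smul, Matrix.one_apply, Matrix.diagonal_apply, apply_ite (sesq That v v), sesq_zero]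
    simp
  rw [e1, e2, e3] at hcs
  have h5 := diag_norm_le n (sesq That u u 1)
  have h6 := diag_norm_le n (((N ^ 2 : ℝ) : ℂ) • sesq That v v 1)
  rw [norm_smul, Complex.norm_real, Real.norm_of_nonneg (by positivity)] at h6
  have h7 := hcs.trans (mul_le_mul h5 h6 (norm_nonneg _) (norm_nonneg _))
  refine (pow_le_pow_iff_left₀ (norm_nonneg _) (by positivity) two_ne_zero).1 ?_
  rw [mul_pow, mul_pow, Real.sq_sqrt (norm_nonneg _), Real.sq_sqrt (norm_nonneg _)]
  linarith

lemma IsCStarNorm.toC {n : ℕ} {ν : Matrix (Fin n) (Fin n) B → ℝ} (h : IsCStarNorm ν) :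
    IsCStarNorm (R := CStarMatrix (Fin n) (Fin n) B) (fun x => ν (CStarMatrix.ofMatrix.symm x)) where
  add_le := h.add_le
  smul_eq := h.smul_eq
  eq_zero_iff := h.eq_zero_iff
  mul_le := h.mul_le
  star_mul_self := h.star_mul_self

end Mat

lemma diag_cp {A B : Type*} [CStarAlgebra A] [CStarAlgebra B]
    (T₁ T₂ : A →ₗ[ℂ] B) (hT₁ : IsCPMap T₁) (hT₂ : IsCPMap T₂) :
    ∃ That : A →ₗ[ℂ] Matrix (Fin 2) (Fin 2) B, IsCPExtension (⇑T₁) (⇑T₂) That := by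
  refine ⟨{ toFun := fun a => Matrix.diagonal ![T₁ a, T₂ a], map_add' := ?_, map_smul' := ?_ },
    ?_, ?_, ?_⟩
  · intro a b
    rw [Matrix.diagonal_add]
    congr 1; ext i; fin_cases i <;> simp
  · intro c a
    rw [RingHom.id_apply, ← Matrix.diagonal_smul]
    congr 1; ext i; fin_cases i <;> simp
  · intro n x hx
    obtain ⟨z₁, h₁⟩ := hT₁ n x hx
    obtain ⟨z₂, h₂⟩ := hT₂ n x hx
    refine ⟨Matrix.of fun i j => Matrix.diagonal ![z₁ i j, z₂ i j], ?_⟩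
    ext i j p q
    have h₁' := congrFun (congrFun h₁ i) j
    have h₂' := congrFun (congrFun h₂ i) j
    simp only [Matrix.map_apply, Matrix.mul_apply, Matrix.star_apply] at h₁' h₂'
    rw [Matrix.mul_apply, Matrix.sum_apply]
    simp only [Matrix.map_apply, Matrix.of_apply, LinearMap.coe_mk, AddHom.coe_mk, Matrix.star_apply,
      Matrix.star_eq_conjTranspose, Matrix.diagonal_conjTranspose, Matrix.diagonal_mul_diagonal]
    fin_cases p <;> fin_cases q <;> simp [h₁', h₂']
  · intro a; simp
  · intro a; simp

theorem stmt12 {A B : Type*} [CStarAlgebra A] [CStarAlgebra B]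
    (T₁ T₂ : A →ₗ[ℂ] B) (hT₁ : IsCPMap T₁) (hT₂ : IsCPMap T₂)
    (νA : ∀ n : ℕ, Matrix (Fin n) (Fin n) A → ℝ)
    (νB : ∀ n : ℕ, Matrix (Fin n) (Fin n) B → ℝ)
    (hνA : ∀ n, IsCStarNorm (νA n)) (hνB : ∀ n, IsCStarNorm (νB n)) :
    (∀ That : A →ₗ[ℂ] Matrix (Fin 2) (Fin 2) B, IsCPExtension (⇑T₁) (⇑T₂) That →
      ∀ (n : ℕ) (x : Matrix (Fin n) (Fin n) A),
        νB n (x.map (fun a => T₁ a - T₂ a)) ≤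
          (Real.sqrt ‖T₁ 1‖ + Real.sqrt ‖T₂ 1‖) *
            Real.sqrt ‖T₁ 1 + T₂ 1 - That 1 0 1 - That 1 1 0‖ * νA n x) ∧
    -- in particular, the cb-norm of `T₁ - T₂` is at most
    -- `(√‖T₁ 1‖ + √‖T₂ 1‖) · β(T₁, T₂)`
    (∀ (n : ℕ) (x : Matrix (Fin n) (Fin n) A),
      νB n (x.map (fun a => T₁ a - T₂ a)) ≤
        (Real.sqrt ‖T₁ 1‖ + Real.sqrt ‖T₂ 1‖) * buresDist (⇑T₁) (⇑T₂) * νA n x) := by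
  let : PartialOrder A := CStarAlgebra.spectralOrder A
  let : StarOrderedRing A := CStarAlgebra.spectralOrderedRing A
  let : PartialOrder B := CStarAlgebra.spectralOrder B
  let : StarOrderedRing B := CStarAlgebra.spectralOrderedRing B
  have main : ∀ That : A →ₗ[ℂ] Matrix (Fin 2) (Fin 2) B, IsCPExtension (⇑T₁) (⇑T₂) That →
      ∀ (n : ℕ) (x : Matrix (Fin n) (Fin n) A),
        νB n (x.map (fun a => T₁ a - T₂ a)) ≤
          (Real.sqrt ‖T₁ 1‖ + Real.sqrt ‖T₂ 1‖) *
            Real.sqrt ‖T₁ 1 + T₂ 1 - That 1 0 1 - That 1 1 0‖ * νA n x := by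
    rintro That ⟨hcp, h0, h1⟩ n x
    have b1 := sesq_bound That hcp ![1, 0] ![1, -1] n x
    have b2 := sesq_bound That hcp ![1, -1] ![0, 1] n x
    have s1 : sesq That ![1, 0] ![1, 0] 1 = T₁ 1 := by
      simp [sesq, dotProduct, Matrix.mulVec, Fin.sum_univ_two, h0]
    have s2 : sesq That ![0, 1] ![0, 1] 1 = T₂ 1 := by
      simp [sesq, dotProduct, Matrix.mulVec, Fin.sum_univ_two, h1]
    have s3 : sesq That ![1, -1] ![1, -1] 1 = T₁ 1 + T₂ 1 - That 1 0 1 - That 1 1 0 := by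
      simp [sesq, dotProduct, Matrix.mulVec, Fin.sum_univ_two, h0, h1]
      abel
    have s4 : x.map (fun a => T₁ a - T₂ a) =
        x.map (sesq That ![1, 0] ![1, -1]) + x.map (sesq That ![1, -1] ![0, 1]) := by
      ext i j
      simp [sesq, dotProduct, Matrix.mulVec, Fin.sum_univ_two, h0, h1, sub_eq_add_neg]
    rw [s1, s3] at b1
    rw [s2, s3] at b2
    have c1 := ((hνB n).toC.le_norm
      (CStarMatrix.ofMatrix (x.map (sesq That ![1, 0] ![1, -1])))).trans b1
    have c2 := ((hνB n).toC.le_norm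
      (CStarMatrix.ofMatrix (x.map (sesq That ![1, -1] ![0, 1])))).trans b2
    rw [Equiv.symm_apply_apply] at c1 c2
    have c3 := (hνA n).toC.norm_le (CStarMatrix.ofMatrix x)
    rw [Equiv.symm_apply_apply] at c3
    rw [s4]
    refine ((hνB n).add_le _ _).trans ?_
    refine (add_le_add c1 c2).trans (le_trans (le_of_eq ?_)
      (mul_le_mul_of_nonneg_left c3 (by positivity)))
    ring
  refine ⟨main, ?_⟩
  intro n x
  set S : Set ℝ := { r : ℝ | ∃ That : A →ₗ[ℂ] Matrix (Fin 2) (Fin 2) B,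
    IsCPExtension T₁ T₂ That ∧ r = ‖T₁ 1 + T₂ 1 - That 1 0 1 - That 1 1 0‖ } with hS
  obtain ⟨T0, hT0⟩ := diag_cp T₁ T₂ hT₁ hT₂
  have hne : S.Nonempty := ⟨_, T0, hT0, rfl⟩
  have hxA : 0 ≤ νA n x := (hνA n).toC.nonneg (CStarMatrix.ofMatrix x)
  have hxB : 0 ≤ νB n (x.map (fun a => T₁ a - T₂ a)) :=
    (hνB n).toC.nonneg (CStarMatrix.ofMatrix (x.map (fun a => T₁ a - T₂ a)))
  set K : ℝ := (Real.sqrt ‖T₁ 1‖ + Real.sqrt ‖T₂ 1‖) with hK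
  have hK0 : 0 ≤ K := by positivity
  change _ ≤ K * Real.sqrt (sInf S) * νA n x
  have key : ∀ r ∈ S, νB n (x.map (fun a => T₁ a - T₂ a)) ≤ (K * νA n x) * Real.sqrt r := by
    rintro r ⟨That, hThat, rfl⟩
    refine (main That hThat n x).trans (le_of_eq ?_)
    ring
  have goal : νB n (x.map (fun a => T₁ a - T₂ a)) ≤ (K * νA n x) * Real.sqrt (sInf S) := by
    rcases (mul_nonneg hK0 hxA).eq_or_lt with h | h
    · obtain ⟨r, hr⟩ := hne
      have := key r hr
      rw [← h, zero_mul] at this ⊢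
      exact this
    · rw [← div_le_iff₀' h]
      apply Real.le_sqrt_of_sq_le
      refine le_csInf hne ?_
      intro r hr
      have hr0 : 0 ≤ r := by
        obtain ⟨That, -, rfl⟩ := hr
        exact norm_nonneg _
      have := key r hr
      rw [← div_le_iff₀' h, Real.le_sqrt (by positivity) hr0] at this
      exact this
  linarith
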